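/- Let n ≥ 1 and 0 < δ < 1. There is a constant C, depending only on n and δ, such that for every measurable function f : ℝ^n → ℝ and every x ∈ ℝ^n,M( (M(|f|^δ))^{1/δ} )(x) ≤ C · M(f)(x), where both sides are allowed to take the value +∞. -/

import Mathlib

open MeasureTheory ENNReal

/-- The uncentered Hardy–Littlewood maximal operator over Euclidean balls, acting on
`[0,∞]`-valued functions: `M g (x) = sup { (1/|B|) ∫_B g : B an open ball containing x }`. -/
noncomputable def maxOp (n : ℕ) (g : EuclideanSpace ℝ (Fin n) → ℝ≥0∞)
    (x : EuclideanSpace ℝ (Fin n)) : ℝ≥0∞ :=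
  ⨆ (c : EuclideanSpace ℝ (Fin n)) (r : ℝ) (_ : 0 < r) (_ : x ∈ Metric.ball c r),
    (volume (Metric.ball c r))⁻¹ * ∫⁻ y in Metric.ball c r, g y

/-!
With `g = |f| ^ δ` and `p = 1 / δ > 1` the claim reads `M ((M g) ^ p) ≤ C * M (g ^ p)`. Let `B` be a
ball through `x`. For `y ∈ B`, an average of `g` over a ball through `y` which is smaller than `B`
only sees `g` on `4B`, and an average over a larger ball is comparable to one over a ball through
`x`, hence at most a multiple of `(M (g ^ p) x) ^ (1 / p)` by Jensen's inequality. The small balls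
are dealt with by the `Lᵖ` bound for `M`, which gives
`∫_B (M (1_{4B} g)) ^ p ≲ ∫_{4B} g ^ p ≲ |B| * M (g ^ p) x`. The `Lᵖ` bound itself comes from the
weak type estimate applied to the part of the function above half the level, integrated over all
levels.
-/

open Metric Set
open scoped NNReal

section Lintegral

variable {α : Type*} [MeasurableSpace α] {μ : Measure α}

theorem mul_rpow_sub_one_eq_rpow (a : ℝ≥0∞) {p : ℝ} (hp : 1 ≤ p) : a * a ^ (p - 1) = a ^ p := by
  have hadd := ENNReal.rpow_add_of_nonneg (x := a) 1 (p - 1) zero_le_one (sub_nonneg.2 hp)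
  rwa [add_sub_cancel, ENNReal.rpow_one, eq_comm] at hadd

theorem lintegral_Ioi_ofReal_rpow_eq_top (s : ℝ) :
    ∫⁻ t in Ioi (0 : ℝ), ENNReal.ofReal (t ^ s) = ∞ := by
  by_contra h
  refine not_integrableOn_Ioi_rpow s ((lintegral_ofReal_ne_top_iff_integrable ?_ ?_).1 h)
  · exact (measurable_id.pow_const s).aestronglyMeasurable
  · filter_upwards [ae_restrict_mem measurableSet_Ioi] with t ht
    exact Real.rpow_nonneg (le_of_lt ht) s

theorem lintegral_rpow_eq_lintegral_measure_ofReal_lt_mul {u : α → ℝ≥0∞} (hu : AEMeasurable u μ)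
    {p : ℝ} (hp : 0 < p) :
    ∫⁻ x, u x ^ p ∂μ = ENNReal.ofReal p *
      ∫⁻ t in Ioi (0 : ℝ), μ {x | ENNReal.ofReal t < u x} * ENNReal.ofReal (t ^ (p - 1)) := by
  by_cases hμ : μ {x | u x = ∞} = 0
  · have hfin : ∀ᵐ x ∂μ, u x ≠ ∞ := measure_eq_zero_iff_ae_notMem.1 hμ
    calc ∫⁻ x, u x ^ p ∂μ = ∫⁻ x, ENNReal.ofReal ((u x).toReal ^ p) ∂μ := by
          refine lintegral_congr_ae (hfin.mono fun x hx => ?_)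
          dsimp only
          rw [← ENNReal.ofReal_rpow_of_nonneg toReal_nonneg hp.le, ofReal_toReal hx]
      _ = ENNReal.ofReal p *
            ∫⁻ t in Ioi (0 : ℝ), μ {x | t < (u x).toReal} * ENNReal.ofReal (t ^ (p - 1)) :=
          lintegral_rpow_eq_lintegral_meas_lt_mul μ (ae_of_all _ fun _ => toReal_nonneg)
            hu.ennreal_toReal hp
      _ = _ := by
          congr 1
          refine setLIntegral_congr_fun measurableSet_Ioi fun t ht => ?_
          congr 1
          refine measure_congr (hfin.mono fun x hx => propext ?_)
          exact (ofReal_lt_iff_lt_toReal (le_of_lt ht) hx).symm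
  · have hleft : ∫⁻ x, u x ^ p ∂μ = ∞ :=
      lintegral_eq_top_of_measure_eq_top_ne_zero (hu.pow_const p)
        (by simpa [ENNReal.rpow_eq_top_iff_of_pos hp] using hμ)
    have hright : ∞ ≤ ∫⁻ t in Ioi (0 : ℝ),
        μ {x | ENNReal.ofReal t < u x} * ENNReal.ofReal (t ^ (p - 1)) :=
      calc ∞ = ∫⁻ t in Ioi (0 : ℝ), μ {x | u x = ∞} * ENNReal.ofReal (t ^ (p - 1)) := by
            rw [lintegral_const_mul _ (by fun_prop), lintegral_Ioi_ofReal_rpow_eq_top,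
              mul_top hμ]
        _ ≤ _ := by
            gcongr with t x
            intro hx
            exact hx ▸ ofReal_lt_top
    rw [hleft, top_le_iff.1 hright, mul_top (ofReal_pos.2 hp).ne']

theorem lintegral_mul_rpow_eq_lintegral_setLIntegral_mul {h u : α → ℝ≥0∞} (hh : Measurable h)
    (hu : Measurable u) {p : ℝ} (hp : 0 < p) :
    ∫⁻ x, h x * u x ^ p ∂μ = ENNReal.ofReal p * ∫⁻ t in Ioi (0 : ℝ),
      (∫⁻ x in {x | ENNReal.ofReal t < u x}, h x ∂μ) * ENNReal.ofReal (t ^ (p - 1)) := by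
  have hcake := lintegral_rpow_eq_lintegral_measure_ofReal_lt_mul
    (μ := μ.withDensity h) hu.aemeasurable hp
  rw [lintegral_withDensity_eq_lintegral_mul μ hh (hu.pow_const p)] at hcake
  simpa only [Pi.mul_apply, withDensity_apply _ (measurableSet_lt measurable_const hu)] using hcake

theorem laverage_rpow_le_laverage_rpow {g : α → ℝ≥0∞} (hg : AEMeasurable g μ) {p : ℝ}
    (hp : 1 ≤ p) : (⨍⁻ x, g x ∂μ) ^ p ≤ ⨍⁻ x, g x ^ p ∂μ := by
  have hp0 : 0 < p := one_pos.trans_le hp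
  have hmass : ((μ univ)⁻¹ • μ) univ ^ (1 / 1 - 1 / p) ≤ 1 := by
    refine ENNReal.rpow_le_one ?_ ?_
    · simpa only [Measure.smul_apply, smul_eq_mul] using ENNReal.inv_mul_le_one _
    · rw [one_div_one, sub_nonneg]
      exact (div_le_one hp0).2 hp
  have hnorm := (eLpNorm'_le_eLpNorm'_mul_rpow_measure_univ one_pos hp
    (hg.smul_measure (μ univ)⁻¹).aestronglyMeasurable).trans (mul_le_of_le_one_right' hmass)
  simp only [eLpNorm', enorm_eq_self, ENNReal.rpow_one, one_div_one] at hnorm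
  rwa [one_div, ENNReal.le_rpow_inv_iff hp0] at hnorm

end Lintegral

section MaximalFunction

variable {X : Type*} [PseudoMetricSpace X] [MeasurableSpace X] {μ : Measure X} {g h : X → ℝ≥0∞}

/-- The uncentered Hardy–Littlewood maximal function of `g` with respect to the measure `μ`: the
supremum of the averages of `g` over the open balls containing a point. A ball of measure `0` or `∞`
contributes the average `0`. -/
noncomputable def maximalFunction (μ : Measure X) (g : X → ℝ≥0∞) (x : X) : ℝ≥0∞ :=
  ⨆ (c : X) (r : ℝ) (_ : x ∈ ball c r), ⨍⁻ y in ball c r, g y ∂μ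

theorem setLAverage_le_maximalFunction (g : X → ℝ≥0∞) {x c : X} {r : ℝ} (hx : x ∈ ball c r) :
    ⨍⁻ y in ball c r, g y ∂μ ≤ maximalFunction μ g x :=
  le_iSup₂_of_le c r (le_iSup_of_le hx le_rfl)

theorem maximalFunction_le_iff {x : X} {t : ℝ≥0∞} :
    maximalFunction μ g x ≤ t ↔ ∀ c r, x ∈ ball c r → ⨍⁻ y in ball c r, g y ∂μ ≤ t := by
  simp only [maximalFunction, iSup_le_iff]

theorem lt_maximalFunction_iff {x : X} {t : ℝ≥0∞} :
    t < maximalFunction μ g x ↔ ∃ c r, x ∈ ball c r ∧ t < ⨍⁻ y in ball c r, g y ∂μ := by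
  simp only [maximalFunction, lt_iSup_iff, exists_prop]

theorem lowerSemicontinuous_maximalFunction (μ : Measure X) (g : X → ℝ≥0∞) :
    LowerSemicontinuous (maximalFunction μ g) := by
  intro x t hx
  obtain ⟨c, r, hxc, ht⟩ := lt_maximalFunction_iff.1 hx
  filter_upwards [isOpen_ball.mem_nhds hxc] with y hy
  exact lt_maximalFunction_iff.2 ⟨c, r, hy, ht⟩

theorem maximalFunction_le_add_const {k : X → ℝ≥0∞} {s : ℝ≥0∞} (hle : ∀ y, h y ≤ k y + s) (x : X) :
    maximalFunction μ h x ≤ maximalFunction μ k x + s := by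
  refine maximalFunction_le_iff.2 fun c r hx => ?_
  calc ⨍⁻ y in ball c r, h y ∂μ ≤ ⨍⁻ y in ball c r, (k y + s) ∂μ := lintegral_mono hle
    _ = ⨍⁻ y in ball c r, k y ∂μ + ⨍⁻ _ in ball c r, s ∂μ :=
        lintegral_add_right _ measurable_const
    _ ≤ maximalFunction μ k x + s := by
        gcongr
        · exact setLAverage_le_maximalFunction k hx
        · exact (setLAverage_le_essSup _ _).trans
            (essSup_le_of_ae_le _ (ae_of_all _ fun _ => le_rfl))

theorem maximalFunction_rpow_le (hg : Measurable g) {p : ℝ} (hp : 1 ≤ p) (x : X) :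
    maximalFunction μ g x ^ p ≤ maximalFunction μ (fun y => g y ^ p) x := by
  have hp0 : 0 < p := one_pos.trans_le hp
  rw [← ENNReal.le_rpow_inv_iff hp0]
  refine maximalFunction_le_iff.2 fun c r hx => (ENNReal.le_rpow_inv_iff hp0).2 ?_
  exact (laverage_rpow_le_laverage_rpow hg.aemeasurable hp).trans
    (setLAverage_le_maximalFunction (fun y => g y ^ p) hx)

end MaximalFunction

/-- The measure `μ` is finite on balls and doubling, with doubling constant `A`. Vanishing on some
ball is allowed. -/
structure IsDoublingWith {X : Type*} [PseudoMetricSpace X] [MeasurableSpace X] (μ : Measure X)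
    (A : ℝ≥0) : Prop where
  measure_ball_ne_top : ∀ x r, μ (ball x r) ≠ ∞
  measure_ball_two_mul_le : ∀ x r, μ (ball x (2 * r)) ≤ A * μ (ball x r)

theorem isDoublingWith_addHaar {E : Type*} [NormedAddCommGroup E] [NormedSpace ℝ E]
    [FiniteDimensional ℝ E] [MeasurableSpace E] [BorelSpace E] (μ : Measure E)
    [μ.IsAddHaarMeasure] : IsDoublingWith μ (2 ^ Module.finrank ℝ E) where
  measure_ball_ne_top _ _ := measure_ball_lt_top.ne
  measure_ball_two_mul_le x r := by
    rw [Measure.addHaar_ball_mul_of_pos μ x two_pos, Measure.addHaar_ball_center μ x,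
      ofReal_pow two_pos.le, ofReal_ofNat, coe_pow, coe_ofNat]

namespace IsDoublingWith

variable {X : Type*} [PseudoMetricSpace X] [MeasurableSpace X] {μ : Measure X} {A : ℝ≥0}
  {g h : X → ℝ≥0∞}

theorem measure_ball_four_mul_le (hμ : IsDoublingWith μ A) (x : X) (r : ℝ) :
    μ (ball x (4 * r)) ≤ A ^ 2 * μ (ball x r) :=
  calc μ (ball x (4 * r)) = μ (ball x (2 * (2 * r))) := by ring_nf
    _ ≤ A * μ (ball x (2 * r)) := hμ.measure_ball_two_mul_le x _
    _ ≤ A * (A * μ (ball x r)) := by grw [hμ.measure_ball_two_mul_le x r]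
    _ = A ^ 2 * μ (ball x r) := by ring

theorem setLIntegral_ball_four_mul_le (hμ : IsDoublingWith μ A) (g : X → ℝ≥0∞) (c : X) (r : ℝ) :
    ∫⁻ y in ball c (4 * r), g y ∂μ
      ≤ A ^ 2 * (⨍⁻ y in ball c (4 * r), g y ∂μ) * μ (ball c r) := by
  rw [← measure_mul_setLAverage g (hμ.measure_ball_ne_top c _)]
  grw [hμ.measure_ball_four_mul_le c r]
  exact (mul_right_comm _ _ _).le

section WeakType

variable [TopologicalSpace.SeparableSpace X] [OpensMeasurableSpace X]

theorem mul_measure_biUnion_ball_le (hμ : IsDoublingWith μ A) {T : Set (X × ℝ)} {R : ℝ}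
    (hpos : ∀ b ∈ T, 0 < b.2) (hR : ∀ b ∈ T, b.2 ≤ R) {t : ℝ≥0∞}
    (ht : ∀ b ∈ T, t * μ (ball b.1 b.2) ≤ ∫⁻ y in ball b.1 b.2, g y ∂μ) :
    t * μ (⋃ b ∈ T, ball b.1 b.2) ≤ A ^ 2 * ∫⁻ y, g y ∂μ := by
  obtain ⟨u, huT, hdisj, hcover⟩ :=
    Vitali.exists_disjoint_subfamily_covering_enlargement_ball T Prod.fst Prod.snd R hR 4
      (by norm_num)
  have hu : u.Countable := hdisj.countable_of_isOpen (fun _ _ => isOpen_ball)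
    fun b hb => nonempty_ball.2 (hpos b (huT hb))
  have hsub : ⋃ b ∈ T, ball b.1 b.2 ⊆ ⋃ b ∈ u, ball b.1 (4 * b.2) :=
    iUnion₂_subset fun b hb =>
      let ⟨b', hb', hbb'⟩ := hcover b hb
      hbb'.trans (subset_biUnion_of_mem (u := fun b : X × ℝ => ball b.1 (4 * b.2)) hb')
  calc t * μ (⋃ b ∈ T, ball b.1 b.2)
      ≤ t * ∑' b : u, μ (ball b.1.1 (4 * b.1.2)) := by
        grw [hsub, measure_biUnion_le μ hu]
    _ ≤ t * ∑' b : u, A ^ 2 * μ (ball b.1.1 b.1.2) := by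
        gcongr
        exact hμ.measure_ball_four_mul_le _ _
    _ = A ^ 2 * ∑' b : u, t * μ (ball b.1.1 b.1.2) := by
        simp_rw [ENNReal.tsum_mul_left]
        ring
    _ ≤ A ^ 2 * ∑' b : u, ∫⁻ y in ball b.1.1 b.1.2, g y ∂μ := by
        gcongr with b
        exact ht b (huT b.2)
    _ = A ^ 2 * ∫⁻ y in ⋃ b ∈ u, ball b.1 b.2, g y ∂μ := by
        rw [lintegral_biUnion hu (fun _ _ => measurableSet_ball) hdisj]
    _ ≤ A ^ 2 * ∫⁻ y, g y ∂μ := by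
        gcongr
        exact Measure.restrict_le_self

theorem mul_measure_lt_maximalFunction_le (hμ : IsDoublingWith μ A) (g : X → ℝ≥0∞) (t : ℝ≥0∞) :
    t * μ {x | t < maximalFunction μ g x} ≤ A ^ 2 * ∫⁻ y, g y ∂μ := by
  -- Vitali's covering lemma needs bounded radii, so exhaust the superlevel set.
  let T (N : ℕ) : Set (X × ℝ) := {b | 0 < b.2 ∧ b.2 ≤ N ∧ t < ⨍⁻ y in ball b.1 b.2, g y ∂μ}
  have hmono : Monotone fun N => ⋃ b ∈ T N, ball b.1 b.2 := fun M N hMN =>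
    biUnion_subset_biUnion_left fun b hb => ⟨hb.1, hb.2.1.trans (Nat.cast_le.2 hMN), hb.2.2⟩
  have hunion : {x | t < maximalFunction μ g x} ⊆ ⋃ N, ⋃ b ∈ T N, ball b.1 b.2 := by
    intro x hx
    obtain ⟨c, r, hxc, ht⟩ := lt_maximalFunction_iff.1 hx
    obtain ⟨N, hN⟩ := exists_nat_ge r
    exact mem_iUnion.2 ⟨N, mem_biUnion (x := (c, r)) ⟨pos_of_mem_ball hxc, hN, ht⟩ hxc⟩
  grw [hunion, hmono.measure_iUnion, ENNReal.mul_iSup]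
  refine iSup_le fun N => hμ.mul_measure_biUnion_ball_le (R := N) (fun b hb => hb.1)
    (fun b hb => hb.2.1) fun b hb => ENNReal.mul_le_of_le_div ?_
  rw [← setLAverage_eq]
  exact hb.2.2.le

theorem mul_measure_lt_maximalFunction_le_setLIntegral (hμ : IsDoublingWith μ A)
    (hh : Measurable h) (t : ℝ≥0∞) :
    t * μ {x | t < maximalFunction μ h x} ≤ 2 * A ^ 2 * ∫⁻ y in {y | t < 2 * h y}, h y ∂μ := by
  set S := {y | t < 2 * h y}
  have hS : MeasurableSet S := measurableSet_lt measurable_const (hh.const_mul 2)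
  have hle : ∀ y, h y ≤ S.indicator h y + t / 2 := by
    intro y
    by_cases hy : y ∈ S
    · rw [indicator_of_mem hy]
      exact le_self_add
    · refine le_add_of_le_right ?_
      rw [ENNReal.le_div_iff_mul_le (by simp) (by simp), mul_comm]
      exact not_lt.1 hy
  have hsub : {x | t < maximalFunction μ h x} ⊆ {x | t / 2 < maximalFunction μ (S.indicator h) x} :=
    fun x (hx : t < _) => lt_of_not_ge fun (hx' : _ ≤ t / 2) => hx.not_ge <|
      calc maximalFunction μ h x ≤ maximalFunction μ (S.indicator h) x + t / 2 :=
            maximalFunction_le_add_const hle x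
        _ ≤ t / 2 + t / 2 := by gcongr
        _ = t := ENNReal.add_halves t
  calc t * μ {x | t < maximalFunction μ h x}
      ≤ t * μ {x | t / 2 < maximalFunction μ (S.indicator h) x} := by gcongr
    _ = 2 * (t / 2 * μ {x | t / 2 < maximalFunction μ (S.indicator h) x}) := by
        rw [← mul_assoc, ENNReal.mul_div_cancel two_ne_zero ofNat_ne_top]
    _ ≤ 2 * (A ^ 2 * ∫⁻ y, S.indicator h y ∂μ) := by
        gcongr 2 * ?_
        exact hμ.mul_measure_lt_maximalFunction_le _ _
    _ = 2 * A ^ 2 * ∫⁻ y in S, h y ∂μ := by rw [lintegral_indicator hS, mul_assoc]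

theorem measure_lt_maximalFunction_mul_rpow_le (hμ : IsDoublingWith μ A) (hh : Measurable h) (s : ℝ)
    {t : ℝ} (ht : 0 < t) :
    μ {x | ENNReal.ofReal t < maximalFunction μ h x} * ENNReal.ofReal (t ^ s) ≤
      2 * A ^ 2 * ((∫⁻ x in {x | ENNReal.ofReal t < 2 * h x}, h x ∂μ) *
        ENNReal.ofReal (t ^ (s - 1))) := by
  have hsplit : ENNReal.ofReal (t ^ s) = ENNReal.ofReal t * ENNReal.ofReal (t ^ (s - 1)) := by
    rw [← ofReal_mul ht.le, Real.rpow_sub_one ht.ne' s, mul_div_cancel₀ _ ht.ne']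
  rw [hsplit, mul_left_comm, ← mul_assoc, ← mul_assoc]
  gcongr ?_ * _
  exact hμ.mul_measure_lt_maximalFunction_le_setLIntegral hh _

theorem lintegral_maximalFunction_rpow_le (hμ : IsDoublingWith μ A) (hh : Measurable h) {p : ℝ}
    (hp : 1 < p) :
    ∫⁻ x, maximalFunction μ h x ^ p ∂μ
      ≤ ENNReal.ofReal (p / (p - 1)) * 2 ^ p * A ^ 2 * ∫⁻ x, h x ^ p ∂μ := by
  have hp1 : 0 < p - 1 := sub_pos.2 hp
  have hp0 : 0 < p := one_pos.trans hp
  have hofReal :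
      ENNReal.ofReal p = ENNReal.ofReal (p / (p - 1)) * ENNReal.ofReal (p - 1) := by
    rw [← ofReal_mul (by positivity), div_mul_cancel₀ p hp1.ne']
  calc ∫⁻ x, maximalFunction μ h x ^ p ∂μ
      = ENNReal.ofReal p * ∫⁻ t in Ioi (0 : ℝ),
          μ {x | ENNReal.ofReal t < maximalFunction μ h x} * ENNReal.ofReal (t ^ (p - 1)) :=
        lintegral_rpow_eq_lintegral_measure_ofReal_lt_mul
          (lowerSemicontinuous_maximalFunction μ h).measurable.aemeasurable hp0
    _ ≤ ENNReal.ofReal p * (2 * A ^ 2 * ∫⁻ t in Ioi (0 : ℝ),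
          (∫⁻ x in {x | ENNReal.ofReal t < 2 * h x}, h x ∂μ) *
            ENNReal.ofReal (t ^ (p - 1 - 1))) := by
        rw [← lintegral_const_mul' (2 * (A : ℝ≥0∞) ^ 2) _ (by finiteness)]
        gcongr _ * ?_
        exact setLIntegral_mono' measurableSet_Ioi fun t ht =>
          hμ.measure_lt_maximalFunction_mul_rpow_le hh (p - 1) ht
    _ = ENNReal.ofReal (p / (p - 1)) * A ^ 2 * (2 * ∫⁻ x, h x * (2 * h x) ^ (p - 1) ∂μ) := by
        rw [lintegral_mul_rpow_eq_lintegral_setLIntegral_mul hh (hh.const_mul 2) hp1, hofReal]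
        ring
    _ = ENNReal.ofReal (p / (p - 1)) * A ^ 2 * ∫⁻ x, (2 * h x) ^ p ∂μ := by
        rw [← lintegral_const_mul' 2 _ ofNat_ne_top]
        simp_rw [← mul_assoc (2 : ℝ≥0∞), mul_rpow_sub_one_eq_rpow _ hp.le]
    _ = ENNReal.ofReal (p / (p - 1)) * 2 ^ p * A ^ 2 * ∫⁻ x, h x ^ p ∂μ := by
        simp_rw [ENNReal.mul_rpow_of_nonneg _ _ hp0.le]
        rw [lintegral_const_mul _ (hh.pow_const p)]
        ring

theorem lintegral_maximalFunction_indicator_rpow_le (hμ : IsDoublingWith μ A) (hg : Measurable g)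
    {p : ℝ} (hp : 1 < p) (c : X) (r : ℝ) :
    ∫⁻ y, maximalFunction μ ((ball c (4 * r)).indicator g) y ^ p ∂μ
      ≤ ENNReal.ofReal (p / (p - 1)) * 2 ^ p * A ^ 4 *
        (⨍⁻ y in ball c (4 * r), g y ^ p ∂μ) * μ (ball c r) := by
  set B := ball c (4 * r)
  have hind : ∀ y, B.indicator g y ^ p = B.indicator (fun z => g z ^ p) y := fun y =>
    (congr_fun (indicator_comp_of_zero (g := (· ^ p))
      (ENNReal.zero_rpow_of_pos (one_pos.trans hp))) y).symm
  calc ∫⁻ y, maximalFunction μ (B.indicator g) y ^ p ∂μ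
      ≤ ENNReal.ofReal (p / (p - 1)) * 2 ^ p * A ^ 2 * ∫⁻ y, B.indicator g y ^ p ∂μ :=
        hμ.lintegral_maximalFunction_rpow_le (hg.indicator measurableSet_ball) hp
    _ = ENNReal.ofReal (p / (p - 1)) * 2 ^ p * A ^ 2 * ∫⁻ y in B, g y ^ p ∂μ := by
        simp_rw [hind]
        rw [lintegral_indicator measurableSet_ball]
    _ ≤ ENNReal.ofReal (p / (p - 1)) * 2 ^ p * A ^ 2 *
          (A ^ 2 * (⨍⁻ y in B, g y ^ p ∂μ) * μ (ball c r)) := by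
        grw [hμ.setLIntegral_ball_four_mul_le (fun y => g y ^ p) c r]
    _ = _ := by ring

end WeakType

theorem maximalFunction_le_max (hμ : IsDoublingWith μ A) [OpensMeasurableSpace X] (g : X → ℝ≥0∞)
    {x y c : X} {r : ℝ} (hx : x ∈ ball c r) (hy : y ∈ ball c r) :
    maximalFunction μ g y ≤ max (maximalFunction μ ((ball c (4 * r)).indicator g) y)
      (A ^ 2 * maximalFunction μ g x) := by
  refine maximalFunction_le_iff.2 fun c' r' hy' => ?_
  rw [mem_ball] at hx hy
  have hyc' : dist y c' < r' := hy'
  have hr' : 0 < r' := pos_of_mem_ball hy'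
  rcases le_total r' r with hle | hle
  · have hsub : ball c' r' ⊆ ball c (4 * r) := ball_subset_ball' <| by
      linarith [dist_triangle_left c' c y]
    refine le_max_of_le_left (le_of_eq_of_le ?_ (setLAverage_le_maximalFunction _ hy'))
    exact setLAverage_congr_fun measurableSet_ball fun z hz => (indicator_of_mem (hsub hz) g).symm
  · have hx' : x ∈ ball c' (4 * r') := by
      rw [mem_ball]
      linarith [dist_triangle4 x c y c', dist_comm c y]
    refine le_max_of_le_right ?_
    rw [setLAverage_eq]
    refine ENNReal.div_le_of_le_mul ?_
    calc ∫⁻ z in ball c' r', g z ∂μ ≤ ∫⁻ z in ball c' (4 * r'), g z ∂μ :=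
          lintegral_mono_set (ball_subset_ball (by linarith))
      _ ≤ A ^ 2 * (⨍⁻ z in ball c' (4 * r'), g z ∂μ) * μ (ball c' r') :=
          hμ.setLIntegral_ball_four_mul_le g c' r'
      _ ≤ A ^ 2 * maximalFunction μ g x * μ (ball c' r') := by
          grw [setLAverage_le_maximalFunction g hx']

theorem maximalFunction_rpow_le_add (hμ : IsDoublingWith μ A) [OpensMeasurableSpace X]
    (hg : Measurable g) {p : ℝ} (hp : 1 ≤ p) {x y c : X} {r : ℝ} (hx : x ∈ ball c r)
    (hy : y ∈ ball c r) :
    maximalFunction μ g y ^ p ≤ maximalFunction μ ((ball c (4 * r)).indicator g) y ^ p +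
      (A ^ 2) ^ p * maximalFunction μ (fun z => g z ^ p) x := by
  have hp0 : 0 ≤ p := zero_le_one.trans hp
  set k := (ball c (4 * r)).indicator g
  calc maximalFunction μ g y ^ p
      ≤ max (maximalFunction μ k y) (A ^ 2 * maximalFunction μ g x) ^ p := by
        grw [hμ.maximalFunction_le_max g hx hy]
    _ = max (maximalFunction μ k y ^ p) ((A ^ 2) ^ p * maximalFunction μ g x ^ p) := by
        rw [(ENNReal.monotone_rpow_of_nonneg hp0).map_max, ENNReal.mul_rpow_of_nonneg _ _ hp0]
    _ ≤ maximalFunction μ k y ^ p + (A ^ 2) ^ p * maximalFunction μ g x ^ p :=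
        max_le_add_of_nonneg zero_le zero_le
    _ ≤ maximalFunction μ k y ^ p + (A ^ 2) ^ p * maximalFunction μ (fun z => g z ^ p) x := by
        grw [maximalFunction_rpow_le hg hp x]

theorem maximalFunction_maximalFunction_rpow_le [TopologicalSpace.SeparableSpace X]
    [OpensMeasurableSpace X] (hμ : IsDoublingWith μ A) (hg : Measurable g) {p : ℝ} (hp : 1 < p)
    (x : X) :
    maximalFunction μ (fun y => maximalFunction μ g y ^ p) x
      ≤ (ENNReal.ofReal (p / (p - 1)) * 2 ^ p * A ^ 4 + (A ^ 2) ^ p) *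
        maximalFunction μ (fun y => g y ^ p) x := by
  set m := maximalFunction μ (fun y => g y ^ p) x
  refine maximalFunction_le_iff.2 fun c r hx => ?_
  have hx4 : x ∈ ball c (4 * r) := ball_subset_ball (by linarith [pos_of_mem_ball hx]) hx
  set k := (ball c (4 * r)).indicator g
  rw [setLAverage_eq]
  refine ENNReal.div_le_of_le_mul ?_
  calc ∫⁻ y in ball c r, maximalFunction μ g y ^ p ∂μ
      ≤ ∫⁻ y in ball c r, (maximalFunction μ k y ^ p + (A ^ 2) ^ p * m) ∂μ :=
        setLIntegral_mono' measurableSet_ball fun y hy =>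
          hμ.maximalFunction_rpow_le_add hg hp.le hx hy
    _ = ∫⁻ y in ball c r, maximalFunction μ k y ^ p ∂μ + (A ^ 2) ^ p * m * μ (ball c r) := by
        rw [lintegral_add_right _ measurable_const, setLIntegral_const]
    _ ≤ ENNReal.ofReal (p / (p - 1)) * 2 ^ p * A ^ 4 * m * μ (ball c r) +
          (A ^ 2) ^ p * m * μ (ball c r) := by
        grw [setLIntegral_le_lintegral, hμ.lintegral_maximalFunction_indicator_rpow_le hg hp c r,
          setLAverage_le_maximalFunction (fun y => g y ^ p) hx4]
    _ = _ := by ring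

end IsDoublingWith

theorem stmt18_general (A : ℝ≥0) {δ : ℝ} (hδ0 : 0 < δ) (hδ1 : δ < 1) :
    ∃ C : ℝ, 0 < C ∧
      ∀ {X : Type*} [PseudoMetricSpace X] [TopologicalSpace.SeparableSpace X] [MeasurableSpace X]
        [OpensMeasurableSpace X] {μ : Measure X}, IsDoublingWith μ A →
        ∀ f : X → ℝ≥0∞, Measurable f → ∀ x : X,
          maximalFunction μ (fun y => maximalFunction μ (fun z => f z ^ δ) y ^ (1 / δ)) x
            ≤ ENNReal.ofReal C * maximalFunction μ f x := by
  set p := 1 / δ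
  have hp : 1 < p := (one_lt_div hδ0).2 hδ1
  set K : ℝ≥0∞ := ENNReal.ofReal (p / (p - 1)) * 2 ^ p * A ^ 4 + (A ^ 2) ^ p
  have hK : K ≠ ∞ := by finiteness
  refine ⟨K.toReal + 1, by positivity, fun {X} _ _ _ _ μ hμ f hf x => ?_⟩
  have hpow : ∀ y, (f y ^ δ) ^ p = f y := fun y => by
    rw [← ENNReal.rpow_mul, mul_one_div_cancel hδ0.ne', ENNReal.rpow_one]
  calc _ ≤ K * maximalFunction μ (fun y => (f y ^ δ) ^ p) x :=
        hμ.maximalFunction_maximalFunction_rpow_le (hf.pow_const δ) hp x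
    _ = K * maximalFunction μ f x := by simp_rw [hpow]
    _ ≤ ENNReal.ofReal (K.toReal + 1) * maximalFunction μ f x := by
        gcongr
        exact (ENNReal.le_ofReal_iff_toReal_le hK (by positivity)).2 (by linarith)

theorem maxOp_eq_maximalFunction (n : ℕ) : maxOp n = maximalFunction volume := by
  ext g x
  refine iSup_congr fun c => iSup_congr fun r => ?_
  rw [iSup_and', setLAverage_eq, ENNReal.div_eq_inv_mul]
  exact iSup_congr_Prop (and_iff_right_of_imp pos_of_mem_ball) fun _ => rfl

theorem stmt18 (n : ℕ) (hn : 1 ≤ n) (δ : ℝ) (hδ0 : 0 < δ) (hδ1 : δ < 1) :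
    ∃ C : ℝ, 0 < C ∧
      ∀ f : EuclideanSpace ℝ (Fin n) → ℝ, Measurable f →
        ∀ x : EuclideanSpace ℝ (Fin n),
          maxOp n
              (fun y => (maxOp n (fun z => ENNReal.ofReal (|f z| ^ δ)) y) ^ (1 / δ)) x
            ≤ ENNReal.ofReal C * maxOp n (fun y => ENNReal.ofReal (|f y|)) x := by
  obtain ⟨C, hC, hbound⟩ := stmt18_general _ hδ0 hδ1
  exact ⟨C, hC, fun f hf x => by
    simpa only [maxOp_eq_maximalFunction, ENNReal.ofReal_rpow_of_nonneg (abs_nonneg _) hδ0.le]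
      using hbound (isDoublingWith_addHaar volume) _ hf.abs.ennreal_ofReal x⟩
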